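/- Suppose n is even. Fix γ ∈ (0,1/2), a real α with 1/(n−Δ) < α < 1/(n−1), S > 0, and φ as described. Define I(s) = (1/(2π))·lim_{R→∞} ∫_{−R}^{R} e(y^n)·sin(2πsy)·(dy/y) (the integrand being extended by its limiting value 2πs at y = 0). Then there exist C > 0 and t₁ > 0 such that for every real t ∈ (0, t₁] and every s ∈ [−S, S], the limit I(s) exists and |U*(t, γ + s·t^{1/n}) − (1/2 − I(s))| ≤ C·t^{αn−1}. -/

import Mathlib

open Filter Finset MeasureTheory

/-- `e(ξ) = exp(2πiξ)`. -/
noncomputable def ee (ξ : ℝ) : ℂ := Complex.exp (2 * Real.pi * Complex.I * ξ)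

/-- The partial sum defining `U(t,x)`:
`2γ + Σ_{0<|k|≤K} (sin(2πγk)/(πk))·e(t·k^n + x·k)`. -/
noncomputable def Upartial (n : ℕ) (γ t x : ℝ) (K : ℕ) : ℂ :=
  Complex.ofReal (2 * γ) +
    ∑ k ∈ (Finset.Icc (-(K : ℤ)) (K : ℤ)).filter (· ≠ 0),
      Complex.ofReal (Real.sin (2 * Real.pi * γ * (k : ℝ)) / (Real.pi * (k : ℝ))) *
        ee (t * (k : ℝ) ^ n + x * (k : ℝ))

/-- The smooth cutoff `φ`: `C^∞`, `φ(x) = 1` for `|x| ≤ 1/2`, `φ(x) = 0` for `|x| ≥ 2`,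
and `φ(x) + φ(1/x) = 1` for all `x ≠ 0`. -/
def GoodPhi (φ : ℝ → ℝ) : Prop :=
  ContDiff ℝ (⊤ : ℕ∞) φ ∧ (∀ x : ℝ, |x| ≤ 1 / 2 → φ x = 1) ∧ (∀ x : ℝ, 2 ≤ |x| → φ x = 0) ∧
    (∀ x : ℝ, x ≠ 0 → φ x + φ x⁻¹ = 1)

/-- `U*(t,x) = 2γ + (1/π)·Σ_{k≠0} φ(k·t^α)·(sin(2πγk)/k)·e(t·k^n + x·k)`
(the `k = 0` term vanishes since `sin(0)/0 = 0`). -/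
noncomputable def Ustar (n : ℕ) (γ : ℝ) (φ : ℝ → ℝ) (α t x : ℝ) : ℂ :=
  Complex.ofReal (2 * γ) + Complex.ofReal (1 / Real.pi) *
    ∑' k : ℤ,
      Complex.ofReal (φ ((k : ℝ) * t ^ α) * (Real.sin (2 * Real.pi * γ * (k : ℝ)) / (k : ℝ))) *
        ee (t * (k : ℝ) ^ n + x * (k : ℝ))

/-- The truncated integral `∫_{−R}^{R} e(y^n)·sin(2πsy)·dy/y`, the integrand extended by its
limiting value `2πs` at `y = 0`. -/
noncomputable def Iint (n : ℕ) (s R : ℝ) : ℂ :=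
  ∫ y in (-R)..R,
    (if y = 0 then Complex.ofReal (2 * Real.pi * s)
      else ee (y ^ n) * Complex.ofReal (Real.sin (2 * Real.pi * s * y)) / Complex.ofReal y)

/-!
Since `sin (2πγk) / (πk)` is the integral of `e(kv)` over `|v| ≤ γ`, `U*(t, γ + σ)` is the integral
over `σ ≤ v ≤ 2γ + σ` of the theta sum `∑ₖ g(k) e(kv)` with `g(y) = φ(t^α y) e(t yⁿ)`. By Poisson
summation the integrand is `∑ₘ 𝓕⁻ g (v - m)`. As `α < 1 / (n - 1)`, the frequencies of `g` are at
most `t^(1 - α(n - 1)) → 0` in order of magnitude, so `𝓕⁻ g` is `O(t)` away from the origin and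
`U*(t, γ + σ)` is `∫_σ^∞ 𝓕⁻ g` up to `O(t)`. The Sokhotski–Plemelj formula turns this half-line
integral into `1/2` minus a principal value, which for `σ = s t^(1/n)` becomes `I(s)` under
`y ↦ t^(1/n) y` once the cutoff `φ` is removed. The error is an oscillatory integral over
`|y| ≳ t^(-α)`, where the phase `t yⁿ ± σy` has no stationary point, and one integration by parts
bounds it by a multiple of `t^(αn - 1)`.
-/

section Exponential

lemma ee_eq_fourierChar (x : ℝ) : ee x = Real.fourierChar x := by
  rw [ee, Real.fourierChar_apply]
  push_cast
  ring_nf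

@[simp] lemma norm_ee (x : ℝ) : ‖ee x‖ = 1 := by
  rw [ee_eq_fourierChar, Circle.norm_coe]

@[simp] lemma ee_zero : ee 0 = 1 := by
  simp [ee]

lemma ee_add (x y : ℝ) : ee (x + y) = ee x * ee y := by
  simp only [ee_eq_fourierChar, AddChar.map_add_eq_mul, Circle.coe_mul]

lemma hasDerivAt_ee (x : ℝ) : HasDerivAt ee (2 * Real.pi * Complex.I * ee x) x := by
  simpa only [ee_eq_fourierChar, funext ee_eq_fourierChar] using Real.hasDerivAt_fourierChar x

lemma hasDerivAt_ee_comp {ψ : ℝ → ℝ} {ψ' x : ℝ} (hψ : HasDerivAt ψ ψ' x) :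
    HasDerivAt (fun x => ee (ψ x)) (2 * Real.pi * Complex.I * ψ' * ee (ψ x)) x :=
  ((hasDerivAt_ee (ψ x)).scomp x hψ).congr_deriv (by rw [Complex.real_smul]; ring)

lemma contDiff_ee : ContDiff ℝ (⊤ : ℕ∞) ee :=
  Complex.contDiff_exp.comp (contDiff_const.mul Complex.ofRealCLM.contDiff)

@[fun_prop] lemma continuous_ee : Continuous ee :=
  contDiff_ee.continuous

lemma ee_sub_ee_neg (x : ℝ) : ee x - ee (-x) = 2 * Complex.I * Real.sin (2 * Real.pi * x) := by
  have heuler (y : ℝ) :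
      ee y = Complex.cos (2 * Real.pi * y) + Complex.sin (2 * Real.pi * y) * Complex.I := by
    rw [ee, mul_right_comm, Complex.exp_mul_I]
  rw [heuler, heuler]
  push_cast
  rw [mul_neg, Complex.cos_neg, Complex.sin_neg]
  ring

lemma integral_ee_mul_right (a b : ℝ) {y : ℝ} (hy : y ≠ 0) :
    ∫ v in a..b, ee (v * y) = (ee (b * y) - ee (a * y)) / (2 * Real.pi * Complex.I * y) := by
  have hd (v : ℝ) : HasDerivAt (fun v => ee (v * y) / (2 * Real.pi * Complex.I * y))
      (ee (v * y)) v :=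
    ((hasDerivAt_ee_comp ((hasDerivAt_id' v).mul_const y)).div_const _).congr_deriv <| by
      have : (y : ℂ) ≠ 0 := mod_cast hy
      rw [one_mul]
      field_simp [Complex.two_pi_I_ne_zero]
  rw [intervalIntegral.integral_eq_sub_of_hasDerivAt (fun v _ => hd v)
    (Continuous.intervalIntegrable (by fun_prop) _ _), sub_div]

end Exponential

section HalfLine

open FourierTransform Topology

lemma integrable_mul_ee {f : ℝ → ℂ} (hf : Integrable f) (v : ℝ) :
    Integrable fun y => f y * ee (v * y) :=
  hf.mul_bdd (c := 1) (Continuous.aestronglyMeasurable (by fun_prop))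
    (.of_forall fun y => (norm_ee _).le)

lemma fourierInv_eq_integral_mul_ee (f : ℝ → ℂ) (v : ℝ) : 𝓕⁻ f v = ∫ y, f y * ee (v * y) := by
  simp only [Real.fourierInv_eq', ee, RCLike.inner_apply, conj_trivial, smul_eq_mul]
  refine integral_congr_ae (.of_forall fun y => ?_)
  dsimp only
  push_cast
  ring_nf

lemma fourierInv_mul_ee (f : ℝ → ℂ) (σ v : ℝ) :
    𝓕⁻ (fun y => f y * ee (σ * y)) v = 𝓕⁻ f (v + σ) := by
  simp only [fourierInv_eq_integral_mul_ee, mul_assoc, ← ee_add]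
  simp only [← add_mul, add_comm σ v]

lemma integral_eq_two_mul_integral_Ioi {f : ℝ → ℂ} (hf : Integrable f) (heven : f.Even) :
    ∫ y, f y = 2 * ∫ y in Set.Ioi 0, f y := by
  have hneg : ∫ y in Set.Iic 0, f y = ∫ y in Set.Ioi 0, f y := by
    simpa only [heven _, neg_zero] using integral_comp_neg_Iic 0 f
  rw [← intervalIntegral.integral_Iic_add_Ioi hf.integrableOn hf.integrableOn, hneg, two_mul]

-- `𝓕⁻ (f y / y)` is a primitive of `2πi 𝓕⁻ f` that vanishes at infinity, by Riemann–Lebesgue.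
lemma integral_Ioi_fourierInv_eq_integral_div {f : ℝ → ℂ} (hf : Integrable f)
    (hf' : Integrable fun y : ℝ => f y / y) (hF : Integrable (𝓕⁻ f)) (h0 : f 0 = 0) :
    ∫ v in Set.Ioi 0, 𝓕⁻ f v = -(2 * Real.pi * Complex.I)⁻¹ * ∫ y, f y / y := by
  set h : ℝ → ℂ := fun y => f y / y
  have hmul : (fun y : ℝ => y • h y) = f := funext fun y => by
    rcases eq_or_ne y 0 with rfl | hy
    · rw [zero_smul, h0]
    · rw [Complex.real_smul, mul_div_cancel₀ _ (Complex.ofReal_ne_zero.2 hy)]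
  have hderiv (v : ℝ) : HasDerivAt (𝓕⁻ h) (2 * Real.pi * Complex.I * 𝓕⁻ f v) v := by
    have := (Real.hasDerivAt_fourier hf' (hmul ▸ hf) (-v)).scomp v (hasDerivAt_neg v)
    simp only [← Real.fourierInv_eq_fourier_neg, Function.comp_def] at this
    refine this.congr_deriv ?_
    simp only [fourierInv_eq_integral_mul_ee, ← hmul, Complex.real_smul, smul_eq_mul, mul_assoc,
      ← integral_const_mul]
    push_cast
    ring_nf
  have hlim : Tendsto (𝓕⁻ h) atTop (𝓝 0) := by
    simpa only [Function.comp_def, ← Real.fourierInv_eq_fourier_neg] using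
      (Real.zero_at_infty_fourier h).comp (tendsto_neg_atTop_atBot.mono_right atBot_le_cocompact)
  have key := integral_Ioi_of_hasDerivAt_of_tendsto' (fun v _ => hderiv v)
    (hF.const_mul _).integrableOn hlim (a := 0)
  rw [integral_const_mul, zero_sub, fourierInv_eq_integral_mul_ee] at key
  simp only [zero_mul, ee_zero, mul_one] at key
  rw [neg_mul, ← mul_neg, ← key, inv_mul_cancel_left₀ Complex.two_pi_I_ne_zero]

-- Sokhotski–Plemelj: the sum of the two half-line integrals is `g 0` by Fourier inversion, and
-- their difference is a principal value.
lemma integral_Ioi_fourierInv {g : ℝ → ℂ} (hg : Integrable g) (hg0 : ContinuousAt g 0)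
    (hG : Integrable (𝓕⁻ g)) (hpv : Integrable fun y : ℝ => (g y - g (-y)) / y) :
    ∫ v in Set.Ioi 0, 𝓕⁻ g v =
      g 0 / 2 - (2 * Real.pi * Complex.I)⁻¹ * ∫ y in Set.Ioi 0, (g y - g (-y)) / (y : ℂ) := by
  have hF : 𝓕⁻ (fun y => g y - g (-y)) = fun v => 𝓕⁻ g v - 𝓕⁻ g (-v) := funext fun v => by
    have hneg : ∫ y, g (-y) * ee (v * y) = 𝓕⁻ g (-v) := by
      simpa only [fourierInv_eq_integral_mul_ee, neg_mul_comm, neg_neg] using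
        integral_neg_eq_self (fun y => g y * ee (v * -y)) volume
    rw [← hneg]
    simp only [fourierInv_eq_integral_mul_ee, sub_mul]
    exact integral_sub (integrable_mul_ee hg v) (integrable_mul_ee hg.comp_neg v)
  have hsum : (∫ v in Set.Ioi 0, 𝓕⁻ g v) + ∫ v in Set.Ioi 0, 𝓕⁻ g (-v) = g 0 := by
    have hinv : ∫ v, 𝓕⁻ g v = g 0 := by
      have : Integrable (𝓕 g) := by
        simpa only [Real.fourierInv_eq_fourier_neg, neg_neg] using hG.comp_neg
      simpa [Real.fourier_eq'] using hg.fourier_fourierInv_eq this hg0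
    rw [integral_comp_neg_Ioi, neg_zero, add_comm,
      intervalIntegral.integral_Iic_add_Ioi hG.integrableOn hG.integrableOn, hinv]
  have hdiff : (∫ v in Set.Ioi 0, 𝓕⁻ g v) - ∫ v in Set.Ioi 0, 𝓕⁻ g (-v) =
      -(2 * Real.pi * Complex.I)⁻¹ * (2 * ∫ y in Set.Ioi 0, (g y - g (-y)) / (y : ℂ)) := by
    have heven : (fun y : ℝ => (g y - g (-y)) / (y : ℂ)).Even := fun y => by
      dsimp only
      rw [neg_neg, Complex.ofReal_neg, div_neg, ← neg_div, neg_sub]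
    rw [← integral_eq_two_mul_integral_Ioi hpv heven,
      ← integral_sub hG.integrableOn hG.comp_neg.integrableOn, ← hF]
    exact integral_Ioi_fourierInv_eq_integral_div (hg.sub hg.comp_neg) hpv
      (hF ▸ hG.sub hG.comp_neg) (by simp)
  linear_combination (hsum + hdiff) / 2

lemma locallyIntegrable_div_self {f : ℝ → ℂ} (hf : Continuous f) (hf' : DifferentiableAt ℝ f 0)
    (h0 : f 0 = 0) : LocallyIntegrable fun y : ℝ => f y / y := by
  have hcont : Continuous (dslope f 0) := continuous_iff_continuousAt.2 fun y => by
    rcases eq_or_ne y 0 with rfl | hy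
    · exact continuousAt_dslope_same.2 hf'
    · exact (continuousAt_dslope_of_ne hy).2 hf.continuousAt
  refine hcont.locallyIntegrable.congr ?_
  filter_upwards [Measure.ae_ne volume 0] with y hy
  rw [dslope_of_ne f hy, slope_def_module, h0, sub_zero, sub_zero, Complex.real_smul,
    Complex.ofReal_inv, div_eq_inv_mul]

lemma integrable_fourierInv {g : ℝ → ℂ} (hg : ContDiff ℝ (⊤ : ℕ∞) g) (hc : HasCompactSupport g) :
    Integrable (𝓕⁻ g) :=
  SchwartzMap.fourierInv_coe (hc.toSchwartzMap hg) ▸ (𝓕⁻ (hc.toSchwartzMap hg)).integrable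

lemma integrable_sub_comp_neg_div {g : ℝ → ℂ} (hg : Differentiable ℝ g)
    (hc : HasCompactSupport g) : Integrable fun y : ℝ => (g y - g (-y)) / y := by
  have hodd : Differentiable ℝ fun y => g y - g (-y) := hg.sub (hg.comp differentiable_neg)
  have hsupp : HasCompactSupport fun y : ℝ => (g y - g (-y)) / y :=
    (hc.sub (hc.comp_homeomorph (Homeomorph.neg ℝ))).mul_right
  exact (integrableOn_iff_integrable_of_support_subset (subset_tsupport _)).1
    ((locallyIntegrable_div_self hodd.continuous (hodd 0) (by simp)).integrableOn_isCompact hsupp)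

theorem integral_Ioi_fourierInv_of_hasCompactSupport {g : ℝ → ℂ} (hg : ContDiff ℝ (⊤ : ℕ∞) g)
    (hc : HasCompactSupport g) (σ : ℝ) :
    ∫ v in Set.Ioi σ, 𝓕⁻ g v = g 0 / 2 - (2 * Real.pi * Complex.I)⁻¹ *
      ∫ y in Set.Ioi 0, (g y * ee (σ * y) - g (-y) * ee (-(σ * y))) / (y : ℂ) := by
  set h : ℝ → ℂ := fun y => g y * ee (σ * y)
  have hh : ContDiff ℝ (⊤ : ℕ∞) h :=
    hg.mul (contDiff_ee.comp (contDiff_const.mul contDiff_id))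
  have hhc : HasCompactSupport h := hc.mul_right
  have := integral_Ioi_fourierInv (hh.continuous.integrable_of_hasCompactSupport hhc)
    hh.continuous.continuousAt (integrable_fourierInv hh hhc)
    (integrable_sub_comp_neg_div (hh.differentiable (by simp)) hhc)
  have hshift : ∫ v in Set.Ioi 0, 𝓕⁻ g (v + σ) = ∫ v in Set.Ioi σ, 𝓕⁻ g v := by
    simpa only [Set.preimage_add_const_Ioi, sub_self] using
      (measurePreserving_add_right volume σ).setIntegral_preimage_emb
        (measurableEmbedding_addRight σ) (𝓕⁻ g) (Set.Ioi σ)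
  simpa only [h, fourierInv_mul_ee, hshift, mul_zero, ee_zero, mul_one, mul_neg] using this

end HalfLine

section Poisson

open FourierTransform

lemma tsum_mul_ee_eq_tsum_fourierInv {g : ℝ → ℂ} (hg : ContDiff ℝ (⊤ : ℕ∞) g)
    (hc : HasCompactSupport g) (v : ℝ) :
    ∑' k : ℤ, g k * ee (v * k) = ∑' m : ℤ, 𝓕⁻ g (v - m) := by
  have hsmooth : ContDiff ℝ (⊤ : ℕ∞) fun y => g y * ee (v * y) :=
    hg.mul (contDiff_ee.comp (contDiff_const.mul contDiff_id))
  have hsupp : HasCompactSupport fun y => g y * ee (v * y) := hc.mul_right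
  have hfourier (m : ℤ) : 𝓕 (hsupp.toSchwartzMap hsmooth) (m : ℝ) = 𝓕⁻ g (v - m) := by
    change 𝓕 (fun y => g y * ee (v * y)) (m : ℝ) = _
    rw [← neg_neg (m : ℝ), ← Real.fourierInv_eq_fourier_neg, fourierInv_mul_ee, neg_neg,
      neg_add_eq_sub]
  simpa [hfourier] using SchwartzMap.tsum_eq_tsum_fourier (hsupp.toSchwartzMap hsmooth) 0

variable {E : Type*} [NormedAddCommGroup E] {F : ℝ → E} {K : ℝ}

lemma nonneg_of_norm_le_div_sq {c : ℝ} (hc : 0 < c) (hF : ∀ v, c ≤ |v| → ‖F v‖ ≤ K / v ^ 2) :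
    0 ≤ K := by
  simpa [hc.ne'] using (le_div_iff₀ (by positivity)).1
    ((norm_nonneg _).trans (hF c (le_abs_self c)))

lemma norm_tsum_sub_le_of_le_div_sq [CompleteSpace E] {c v : ℝ} (hc : 0 < c)
    (hF : ∀ v, c ≤ |v| → ‖F v‖ ≤ K / v ^ 2) (hv : |v| ≤ 1 - c) :
    ‖∑' m : ℤ, F (v - m) - F v‖ ≤ K / c ^ 2 * ∑' m : ℤ, 1 / (m : ℝ) ^ 2 := by
  have hK : 0 ≤ K := nonneg_of_norm_le_div_sq hc hF
  have hdecay (m : ℤ) (hm : m ≠ 0) : ‖F (v - m)‖ ≤ K / c ^ 2 * (1 / (m : ℝ) ^ 2) := by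
    have h1 : (1 : ℝ) ≤ |(m : ℝ)| := mod_cast Int.one_le_abs hm
    have h2 : c * |(m : ℝ)| ≤ |v - m| := by
      have := abs_sub_abs_le_abs_sub (m : ℝ) v
      rw [abs_sub_comm] at this
      nlinarith [abs_nonneg v]
    calc ‖F (v - m)‖ ≤ K / |v - m| ^ 2 := by
          rw [sq_abs]; exact hF _ (by nlinarith)
      _ ≤ K / (c * |(m : ℝ)|) ^ 2 := by gcongr
      _ = _ := by rw [mul_pow, sq_abs, div_mul_div_comm, mul_one]
  have hsum : Summable fun m : ℤ => K / c ^ 2 * (1 / (m : ℝ) ^ 2) :=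
    (Real.summable_one_div_int_pow.2 one_lt_two).mul_left _
  have hle (m : ℤ) : ‖if m = 0 then 0 else F (v - m)‖ ≤ K / c ^ 2 * (1 / (m : ℝ) ^ 2) := by
    split_ifs with hm
    · simp [hm]
    · exact hdecay m hm
  have hsummable : Summable fun m : ℤ => F (v - m) := by
    refine .of_norm_bounded_eventually hsum ?_
    filter_upwards [(Set.finite_singleton (0 : ℤ)).compl_mem_cofinite] with m hm using hdecay m hm
  rw [hsummable.tsum_eq_add_tsum_ite 0, Int.cast_zero, sub_zero, add_sub_cancel_left,
    ← tsum_mul_left]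
  exact tsum_of_norm_bounded hsum.hasSum hle

lemma norm_integral_Ioi_le_of_le_div_sq [NormedSpace ℝ E] {θ : ℝ} (hθ : 0 < θ)
    (hF : ∀ v, θ ≤ v → ‖F v‖ ≤ K / v ^ 2) : ‖∫ v in Set.Ioi θ, F v‖ ≤ K / θ := by
  have hint : IntegrableOn (fun v : ℝ => K * v ^ (-2 : ℝ)) (Set.Ioi θ) :=
    (integrableOn_Ioi_rpow_of_lt (by norm_num) hθ).const_mul K
  have hle : ∀ v ∈ Set.Ioi θ, ‖F v‖ ≤ K * v ^ (-2 : ℝ) := fun v hv => by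
    simpa [Real.rpow_neg (hθ.trans hv).le, div_eq_mul_inv] using hF v hv.le
  calc ‖∫ v in Set.Ioi θ, F v‖ ≤ ∫ v in Set.Ioi θ, K * v ^ (-2 : ℝ) :=
        norm_integral_le_of_norm_le hint ((ae_restrict_mem measurableSet_Ioi).mono hle)
    _ = K / θ := by
        rw [integral_const_mul, integral_Ioi_rpow_of_lt (by norm_num) hθ]
        norm_num [Real.rpow_neg_one, div_eq_mul_inv]

lemma finite_setOf_intCast_ne_zero {g : ℝ → ℂ} (hc : HasCompactSupport g) :
    {k : ℤ | g k ≠ 0}.Finite := by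
  have := hasCompactSupport_iff_eventuallyEq.1 hc
  rw [coclosedCompact_eq_cocompact] at this
  exact Int.tendsto_coe_cofinite.eventually this

lemma tsum_mul_ee_eq_sum {g : ℝ → ℂ} (hc : HasCompactSupport g) (v : ℝ) :
    ∑' k : ℤ, g k * ee (v * k) =
      ∑ k ∈ (finite_setOf_intCast_ne_zero hc).toFinset, g k * ee (v * k) :=
  tsum_eq_sum fun k hk => by
    have : g k = 0 := by simpa using hk
    rw [this, zero_mul]

theorem norm_integral_tsum_sub_integral_Ioi_le {g : ℝ → ℂ} (hg : ContDiff ℝ (⊤ : ℕ∞) g)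
    (hc : HasCompactSupport g) {c σ θ : ℝ} (hc0 : 0 < c)
    (hK : ∀ v, c ≤ |v| → ‖𝓕⁻ g v‖ ≤ K / v ^ 2) (hσ : -(1 - c) ≤ σ) (hσθ : σ ≤ θ)
    (hcθ : c ≤ θ) (hθ : θ ≤ 1 - c) :
    ‖(∫ v in σ..θ, ∑' k : ℤ, g k * ee (v * k)) - ∫ v in Set.Ioi σ, 𝓕⁻ g v‖ ≤
      K * (2 / c ^ 2 * (∑' m : ℤ, 1 / (m : ℝ) ^ 2) + 1 / c) := by
  set Z : ℝ := ∑' m : ℤ, 1 / (m : ℝ) ^ 2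
  have hZ : 0 ≤ Z := tsum_nonneg fun m => by positivity
  have hF := integrable_fourierInv hg hc
  have hΘ : IntervalIntegrable (fun v : ℝ => ∑' k : ℤ, g k * ee (v * k)) volume σ θ := by
    simp only [tsum_mul_ee_eq_sum hc]
    exact Continuous.intervalIntegrable (by fun_prop) _ _
  have hK0 : 0 ≤ K := nonneg_of_norm_le_div_sq hc0 hK
  have hperiod : ‖∫ v in σ..θ, ((∑' k : ℤ, g k * ee (v * k)) - 𝓕⁻ g v)‖ ≤
      K / c ^ 2 * Z * 2 := by
    refine (intervalIntegral.norm_integral_le_of_norm_le_const fun v hv => ?_).trans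
      (mul_le_mul_of_nonneg_left (a := K / c ^ 2 * Z) (c := 2) ?_ ?_)
    · rw [Set.uIoc_of_le hσθ] at hv
      rw [tsum_mul_ee_eq_tsum_fourierInv hg hc]
      exact norm_tsum_sub_le_of_le_div_sq hc0 hK (abs_le.2 ⟨by linarith [hv.1], hv.2.trans hθ⟩)
    · rw [abs_of_nonneg (by linarith)]
      linarith
    · exact mul_nonneg (by positivity) hZ
  have htail : ‖∫ v in Set.Ioi θ, 𝓕⁻ g v‖ ≤ K / c :=
    (norm_integral_Ioi_le_of_le_div_sq (hc0.trans_le hcθ) fun v hv =>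
      hK v ((hcθ.trans hv).trans (le_abs_self v))).trans (by gcongr)
  have hsplit : (∫ v in σ..θ, ∑' k : ℤ, g k * ee (v * k)) - ∫ v in Set.Ioi σ, 𝓕⁻ g v =
      (∫ v in σ..θ, ((∑' k : ℤ, g k * ee (v * k)) - 𝓕⁻ g v)) - ∫ v in Set.Ioi θ, 𝓕⁻ g v := by
    rw [intervalIntegral.integral_sub hΘ hF.intervalIntegrable,
      ← intervalIntegral.integral_Ioi_sub_Ioi hF.integrableOn hσθ, sub_sub, sub_add_cancel]
  rw [hsplit]
  refine (norm_sub_le _ _).trans ((add_le_add hperiod htail).trans_eq ?_)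
  ring

end Poisson

section Decay

open FourierTransform

lemma contDiff_mul_ee {φ : ℝ → ℂ} {p : ℝ → ℝ} (hφ : ContDiff ℝ (⊤ : ℕ∞) φ)
    (hp : ContDiff ℝ (⊤ : ℕ∞) p) (μ : ℝ) : ContDiff ℝ (⊤ : ℕ∞) fun z => φ z * ee (μ * p z) :=
  hφ.mul (contDiff_ee.comp (contDiff_const.mul hp))

lemma deriv_mul_ee {φ : ℝ → ℂ} {p : ℝ → ℝ} (hφ : Differentiable ℝ φ) (hp : Differentiable ℝ p)
    (μ z : ℝ) :
    deriv (fun z => φ z * ee (μ * p z)) z = deriv φ z * ee (μ * p z) +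
      μ * (2 * Real.pi * Complex.I * deriv p z * φ z * ee (μ * p z)) := by
  refine ((hφ z).hasDerivAt.mul
    (hasDerivAt_ee_comp ((hp z).hasDerivAt.const_mul μ))).deriv.trans ?_
  push_cast
  ring

lemma norm_fourierInv_deriv {f : ℝ → ℂ} (hf : ContDiff ℝ 1 f) (hc : HasCompactSupport f) (v : ℝ) :
    ‖𝓕⁻ (deriv f) v‖ = 2 * Real.pi * |v| * ‖𝓕⁻ f v‖ := by
  rw [Real.fourierInv_eq_fourier_neg, Real.fourierInv_eq_fourier_neg,
    Real.fourier_deriv (hf.continuous.integrable_of_hasCompactSupport hc)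
      (hf.differentiable one_ne_zero)
      ((hf.continuous_deriv le_rfl).integrable_of_hasCompactSupport hc.deriv)]
  simp [abs_of_pos Real.pi_pos]

lemma norm_fourierInv_le (f : ℝ → ℂ) (v : ℝ) : ‖𝓕⁻ f v‖ ≤ ∫ y, ‖f y‖ := by
  simpa [fourierInv_eq_integral_mul_ee] using
    norm_integral_le_integral_norm fun y => f y * ee (v * y)

lemma norm_fourierInv_add_const_mul_le {f g : ℝ → ℂ} (hf : Integrable f) (hg : Integrable g)
    {μ : ℝ} (hμ : 0 ≤ μ) (v : ℝ) :
    ‖𝓕⁻ (fun y => f y + μ * g y) v‖ ≤ ‖𝓕⁻ f v‖ + μ * ‖𝓕⁻ g v‖ := by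
  simp only [fourierInv_eq_integral_mul_ee, add_mul, mul_assoc]
  rw [integral_add (integrable_mul_ee hf v) ((integrable_mul_ee hg v).const_mul _),
    integral_const_mul]
  refine (norm_add_le _ _).trans_eq ?_
  rw [norm_mul, Complex.norm_real, Real.norm_of_nonneg hμ]

lemma exists_pow_mul_norm_fourierInv_mul_ee_le {p : ℝ → ℝ} (hp : ContDiff ℝ (⊤ : ℕ∞) p) (N : ℕ) :
    ∀ {φ : ℝ → ℂ}, ContDiff ℝ (⊤ : ℕ∞) φ → HasCompactSupport φ →
      ∃ C, ∀ μ, 1 ≤ μ → ∀ v, |v| ^ N * ‖𝓕⁻ (fun z => φ z * ee (μ * p z)) v‖ ≤ C * μ ^ N := by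
  induction N with
  | zero =>
    intro φ _ _
    refine ⟨∫ y, ‖φ y‖, fun μ _ v => ?_⟩
    simpa using norm_fourierInv_le (fun z => φ z * ee (μ * p z)) v
  | succ N ih =>
    intro φ hφ hc
    have hφ' : ContDiff ℝ (⊤ : ℕ∞) (deriv φ) := (contDiff_infty_iff_deriv.1 hφ).2
    have hp' : ContDiff ℝ (⊤ : ℕ∞) (deriv p) := (contDiff_infty_iff_deriv.1 hp).2
    have hq : ContDiff ℝ (⊤ : ℕ∞) fun z => 2 * Real.pi * Complex.I * deriv p z * φ z :=
      (contDiff_const.mul (Complex.ofRealCLM.contDiff.comp hp')).mul hφ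
    obtain ⟨C₁, h₁⟩ := ih hφ' hc.deriv
    obtain ⟨C₂, h₂⟩ := ih hq hc.mul_left
    refine ⟨C₁ + C₂, fun μ hμ v => ?_⟩
    have hμ0 : 0 < μ := one_pos.trans_le hμ
    have hint {χ : ℝ → ℂ} (hχ : ContDiff ℝ (⊤ : ℕ∞) χ) (hχc : HasCompactSupport χ) :
        Integrable fun z => χ z * ee (μ * p z) :=
      (contDiff_mul_ee hχ hp μ).continuous.integrable_of_hasCompactSupport hχc.mul_right
    have hderiv := norm_fourierInv_deriv ((contDiff_mul_ee hφ hp μ).of_le (by simp))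
      hc.mul_right v
    rw [funext (deriv_mul_ee (hφ.differentiable (by simp)) (hp.differentiable (by simp)) μ)]
      at hderiv
    have hC₁ : 0 ≤ C₁ * μ ^ N := (by positivity : (0 : ℝ) ≤ _).trans (h₁ μ hμ v)
    set X := ‖𝓕⁻ (fun z => φ z * ee (μ * p z)) v‖
    calc |v| ^ (N + 1) * X = |v| ^ N * (|v| * X) := by ring
      _ ≤ |v| ^ N * (2 * Real.pi * |v| * X) := by
          gcongr
          nlinarith [Real.pi_gt_three, abs_nonneg v]
      _ ≤ |v| ^ N * (_ + μ * _) := by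
          rw [← hderiv]
          gcongr
          exact norm_fourierInv_add_const_mul_le (hint hφ' hc.deriv) (hint hq hc.mul_left) hμ0.le v
      _ ≤ C₁ * μ ^ N + μ * (C₂ * μ ^ N) := by
          rw [mul_add, mul_left_comm]
          exact add_le_add (h₁ μ hμ v) (mul_le_mul_of_nonneg_left (h₂ μ hμ v) hμ0.le)
      _ ≤ (C₁ + C₂) * μ ^ (N + 1) := by
          rw [pow_succ]
          nlinarith

/-- The summand `y ↦ φ(r y) e(t y ^ n)` of the smoothed theta sum, with `r = t ^ α` in the
application. The amplitude is complex-valued to match the Fourier transform of the library. -/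
noncomputable def cutoffPhase (φ : ℝ → ℂ) (n : ℕ) (r t y : ℝ) : ℂ :=
  φ (r * y) * ee (t * y ^ n)

variable {φ : ℝ → ℂ} {n : ℕ} {r : ℝ}

lemma contDiff_cutoffPhase (hφ : ContDiff ℝ (⊤ : ℕ∞) φ) (n : ℕ) (r t : ℝ) :
    ContDiff ℝ (⊤ : ℕ∞) (cutoffPhase φ n r t) :=
  contDiff_mul_ee (hφ.comp (contDiff_const.mul contDiff_id)) (contDiff_id.pow n) t

lemma hasCompactSupport_cutoffPhase (hc : HasCompactSupport φ) (hr : r ≠ 0) (n : ℕ) (t : ℝ) :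
    HasCompactSupport (cutoffPhase φ n r t) :=
  (hc.comp_homeomorph (Homeomorph.mulLeft₀ r hr)).mul_right

lemma fourierInv_cutoffPhase (hr : 0 < r) (n : ℕ) (t v : ℝ) :
    𝓕⁻ (cutoffPhase φ n r t) v =
      (r : ℂ)⁻¹ * 𝓕⁻ (fun z => φ z * ee (t / r ^ n * z ^ n)) (v / r) := by
  have := Measure.integral_comp_mul_left
    (fun z => φ z * ee (t / r ^ n * z ^ n) * ee (v / r * z)) r
  rw [abs_of_pos (inv_pos.2 hr), Complex.real_smul, Complex.ofReal_inv] at this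
  rw [fourierInv_eq_integral_mul_ee, fourierInv_eq_integral_mul_ee, ← this]
  simp only [cutoffPhase, mul_pow, ← mul_assoc, div_mul_cancel₀ _ hr.ne',
    div_mul_cancel₀ _ (pow_ne_zero n hr.ne')]

lemma exists_pow_mul_norm_fourierInv_cutoffPhase_le (hφ : ContDiff ℝ (⊤ : ℕ∞) φ)
    (hc : HasCompactSupport φ) (n N : ℕ) :
    ∃ C, ∀ r t, 0 < r → r ^ n ≤ t → ∀ v,
      |v| ^ N * ‖𝓕⁻ (cutoffPhase φ n r t) v‖ ≤ C * r⁻¹ * (r * (t / r ^ n)) ^ N := by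
  obtain ⟨C, hC⟩ := exists_pow_mul_norm_fourierInv_mul_ee_le (p := fun z => z ^ n)
    (contDiff_id.pow n) N hφ hc
  refine ⟨C, fun r t hr hrt v => ?_⟩
  have key := hC (t / r ^ n) ((one_le_div (by positivity)).2 hrt) (v / r)
  rw [abs_div, abs_of_pos hr, div_pow] at key
  rw [fourierInv_cutoffPhase hr, norm_mul, norm_inv, Complex.norm_real, Real.norm_of_nonneg hr.le,
    mul_pow]
  calc |v| ^ N * (r⁻¹ * ‖𝓕⁻ (fun z => φ z * ee (t / r ^ n * z ^ n)) (v / r)‖)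
      = r⁻¹ * r ^ N *
          (|v| ^ N / r ^ N * ‖𝓕⁻ (fun z => φ z * ee (t / r ^ n * z ^ n)) (v / r)‖) := by
        field_simp
    _ ≤ r⁻¹ * r ^ N * (C * (t / r ^ n) ^ N) := by gcongr
    _ = C * r⁻¹ * (r ^ N * (t / r ^ n) ^ N) := by ring

lemma rpow_mul_div_rpow_pow {t : ℝ} (ht : 0 < t) (α : ℝ) (n : ℕ) :
    t ^ α * (t / (t ^ α) ^ n) = t ^ (1 - α * (n - 1)) := by
  rw [← Real.rpow_mul_natCast ht.le, Real.rpow_sub ht, Real.rpow_one, mul_sub, mul_one,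
    Real.rpow_sub ht]
  field_simp

lemma exists_norm_fourierInv_cutoffPhase_le (hφ : ContDiff ℝ (⊤ : ℕ∞) φ)
    (hc : HasCompactSupport φ) {α c : ℝ} (hαn : 1 ≤ α * n) (hαn' : α * (n - 1) < 1)
    (hc0 : 0 < c) : ∃ C, ∀ t ∈ Set.Ioc (0 : ℝ) 1, ∀ v, c ≤ |v| →
      ‖𝓕⁻ (cutoffPhase φ n (t ^ α) t) v‖ ≤ C * t / v ^ 2 := by
  -- After `M + 2` integrations by parts the bound is `t ^ ((M + 2) * (1 - α * (n - 1)) - α) ≤ t`.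
  obtain ⟨M, hM⟩ := exists_nat_ge ((1 + α) / (1 - α * (n - 1)))
  obtain ⟨C, hC⟩ := exists_pow_mul_norm_fourierInv_cutoffPhase_le hφ hc n (M + 2)
  refine ⟨|C| / c ^ M, fun t ht v hv => ?_⟩
  obtain ⟨ht0, ht1⟩ := ht
  have hcut : (t ^ α) ^ n ≤ t := by
    rw [← Real.rpow_mul_natCast ht0.le]
    exact (Real.rpow_le_rpow_of_exponent_ge ht0 ht1 hαn).trans_eq (Real.rpow_one t)
  have hpow : (t ^ α)⁻¹ * (t ^ α * (t / (t ^ α) ^ n)) ^ (M + 2) ≤ t := by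
    rw [rpow_mul_div_rpow_pow ht0, ← Real.rpow_mul_natCast ht0.le, ← Real.rpow_neg ht0.le,
      ← Real.rpow_add ht0]
    refine (Real.rpow_le_rpow_of_exponent_ge ht0 ht1 ?_).trans_eq (Real.rpow_one t)
    rw [div_le_iff₀ (by linarith)] at hM
    push_cast
    nlinarith
  have hdecay := hC (t ^ α) t (Real.rpow_pos_of_pos ht0 α) hcut v
  have hv0 : v ≠ 0 := abs_pos.1 (hc0.trans_le hv)
  rw [div_mul_eq_mul_div, div_div, le_div_iff₀ (by positivity)]
  calc ‖𝓕⁻ (cutoffPhase φ n (t ^ α) t) v‖ * (c ^ M * v ^ 2)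
      ≤ ‖𝓕⁻ (cutoffPhase φ n (t ^ α) t) v‖ * (|v| ^ M * v ^ 2) := by gcongr
    _ = |v| ^ (M + 2) * ‖𝓕⁻ (cutoffPhase φ n (t ^ α) t) v‖ := by
        rw [pow_add, sq_abs, mul_comm]
    _ ≤ |C| * ((t ^ α)⁻¹ * (t ^ α * (t / (t ^ α) ^ n)) ^ (M + 2)) := by
        rw [← mul_assoc]
        refine hdecay.trans ?_
        gcongr
        exact le_abs_self C
    _ ≤ |C| * t := by gcongr

end Decay

section Oscillatory

open Topology

lemma intervalIntegral_mul_ee_eq_sub {f f' : ℝ → ℂ} {ψ ψ' : ℝ → ℝ} {a b : ℝ}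
    (hf : ∀ x ∈ Set.uIcc a b, HasDerivAt f (f' x) x)
    (hψ : ∀ x ∈ Set.uIcc a b, HasDerivAt ψ (ψ' x) x) (hψ' : ContinuousOn ψ' (Set.uIcc a b))
    (hf' : IntervalIntegrable f' volume a b) :
    ∫ x in a..b, f x * ψ' x * ee (ψ x) = (2 * Real.pi * Complex.I)⁻¹ *
      (f b * ee (ψ b) - f a * ee (ψ a) - ∫ x in a..b, f' x * ee (ψ x)) := by
  have hψ_cont : ContinuousOn ψ (Set.uIcc a b) :=
    fun x hx => (hψ x hx).continuousAt.continuousWithinAt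
  rw [← intervalIntegral.integral_mul_deriv_eq_deriv_mul hf
    (fun x hx => hasDerivAt_ee_comp (hψ x hx)) hf'
    (ContinuousOn.intervalIntegrable (by fun_prop)), ← intervalIntegral.integral_const_mul]
  refine intervalIntegral.integral_congr fun x _ => ?_
  field_simp [Complex.two_pi_I_ne_zero]

lemma exists_tendsto_integral_mul_ee {f f' : ℝ → ℂ} {ψ ψ' : ℝ → ℝ} {a : ℝ}
    (hf : ∀ x, a ≤ x → HasDerivAt f (f' x) x) (hψ : ∀ x, a ≤ x → HasDerivAt ψ (ψ' x) x)
    (hψ' : ContinuousOn ψ' (Set.Ici a)) (hf' : IntegrableOn f' (Set.Ioi a))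
    (hlim : Tendsto f atTop (𝓝 0)) :
    ∃ L, Tendsto (fun R => ∫ x in a..R, f x * ψ' x * ee (ψ x)) atTop (𝓝 L) ∧
      ‖L‖ ≤ (2 * Real.pi)⁻¹ * (‖f a‖ + ∫ x in Set.Ioi a, ‖f' x‖) := by
  have hee_cont : ContinuousOn (fun x => ee (ψ x)) (Set.Ioi a) := fun x hx =>
    (hasDerivAt_ee_comp (hψ x (le_of_lt hx))).continuousAt.continuousWithinAt
  have hint : IntegrableOn (fun x => f' x * ee (ψ x)) (Set.Ioi a) :=
    hf'.mul_bdd (c := 1) (hee_cont.aestronglyMeasurable measurableSet_Ioi)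
      (.of_forall fun x => (norm_ee _).le)
  have hparts : ∀ᶠ R in atTop, (2 * Real.pi * Complex.I)⁻¹ *
      (f R * ee (ψ R) - f a * ee (ψ a) - ∫ x in a..R, f' x * ee (ψ x)) =
      ∫ x in a..R, f x * ψ' x * ee (ψ x) := by
    filter_upwards [eventually_ge_atTop a] with R hR
    have huIcc : Set.uIcc a R ⊆ Set.Ici a := by
      rw [Set.uIcc_of_le hR]
      exact Set.Icc_subset_Ici_self
    refine (intervalIntegral_mul_ee_eq_sub (fun x hx => hf x (huIcc hx))
      (fun x hx => hψ x (huIcc hx)) (hψ'.mono huIcc) ?_).symm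
    rw [intervalIntegrable_iff_integrableOn_Ioc_of_le hR]
    exact hf'.mono_set Set.Ioc_subset_Ioi_self
  have hlim' : Tendsto (fun R => f R * ee (ψ R)) atTop (𝓝 0) :=
    squeeze_zero_norm (a := fun R => ‖f R‖) (fun R => by simp) (by simpa using hlim.norm)
  refine ⟨_, (((hlim'.sub_const _).sub
    (intervalIntegral_tendsto_integral_Ioi a hint tendsto_id)).const_mul _).congr' hparts, ?_⟩
  have hnorm : ‖∫ x in Set.Ioi a, f' x * ee (ψ x)‖ ≤ ∫ x in Set.Ioi a, ‖f' x‖ :=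
    (norm_integral_le_integral_norm _).trans_eq (by simp)
  have h2π : ‖(2 * Real.pi * Complex.I : ℂ)‖ = 2 * Real.pi := by
    simp [abs_of_pos Real.pi_pos]
  rw [norm_mul, norm_inv, h2π, zero_sub]
  gcongr
  exact (norm_sub_le _ _).trans (add_le_add (by simp) hnorm)

lemma mul_div_two_le_mul_add {N M e : ℝ} (hN : 1 ≤ N) (hM : 0 ≤ M) (he : |e| ≤ M / 2) :
    N * M / 2 ≤ N * M + e := by
  have := (abs_le.1 he).1
  nlinarith

-- This bounds `deriv (ρ / D)` for `D x = N * M x + η * x` with `M` homogeneous of degree `N`, where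
-- the linear term `e = η * x` is dominated by `M`.
lemma norm_sub_div_sq_le {x B M N D D' e : ℝ} {ρ ρ' : ℂ} (hx : 0 < x) (hM : 0 < M) (hN : 1 ≤ N)
    (he : |e| ≤ M / 2) (hD : D = N * M + e) (hD' : x * D' = N ^ 2 * M + e) (hρ : ‖ρ‖ ≤ B)
    (hρ' : ‖x * ρ'‖ ≤ B) : ‖(ρ' * D - ρ * D') / D ^ 2‖ ≤ 8 * B / M * x⁻¹ := by
  have hD_ge : N * M / 2 ≤ D := hD ▸ mul_div_two_le_mul_add hN hM.le he
  have hD0 : 0 < D := lt_of_lt_of_le (by positivity) hD_ge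
  have hB : 0 ≤ B := (norm_nonneg ρ).trans hρ
  have hD'_le : |x * D'| ≤ 3 / 2 * N ^ 2 * M := by
    rw [hD']
    calc |N ^ 2 * M + e| ≤ N ^ 2 * M + M / 2 :=
          (abs_add_le _ _).trans (add_le_add (abs_of_pos (by positivity)).le he)
      _ ≤ 3 / 2 * N ^ 2 * M := by nlinarith [one_le_pow₀ hN (n := 2)]
  have hnum : x * ‖ρ' * D - ρ * D'‖ ≤ B * D + B * (3 / 2 * N ^ 2 * M) := by
    calc x * ‖ρ' * D - ρ * D'‖ = ‖x * (ρ' * D - ρ * D')‖ := by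
          rw [norm_mul, Complex.norm_real, Real.norm_of_nonneg hx.le]
      _ = ‖x * ρ' * D - ρ * ↑(x * D')‖ := by
          push_cast
          ring_nf
      _ ≤ ‖x * ρ'‖ * D + ‖ρ‖ * |x * D'| := by
        refine (norm_sub_le _ _).trans_eq ?_
        rw [norm_mul _ (D : ℂ), norm_mul ρ, Complex.norm_real, Complex.norm_real,
          Real.norm_of_nonneg hD0.le, Real.norm_eq_abs]
      _ ≤ _ := by gcongr
  have hNM : N ^ 2 * M ^ 2 ≤ 4 * D ^ 2 := by
    calc N ^ 2 * M ^ 2 = 4 * (N * M / 2) ^ 2 := by ring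
      _ ≤ 4 * D ^ 2 := by gcongr
  have hden : (B * D + B * (3 / 2 * N ^ 2 * M)) * M ≤ 8 * B * D ^ 2 := by
    calc (B * D + B * (3 / 2 * N ^ 2 * M)) * M
        = B * (D * M + 3 / 2 * (N ^ 2 * M ^ 2)) := by ring
      _ ≤ B * (D * (2 * D) + 3 / 2 * (4 * D ^ 2)) := by gcongr; nlinarith
      _ = 8 * B * D ^ 2 := by ring
  rw [norm_div, norm_pow, Complex.norm_real, Real.norm_of_nonneg hD0.le, ← div_eq_mul_inv, div_div,
    div_le_div_iff₀ (by positivity) (by positivity)]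
  nlinarith

lemma abs_mul_le_mul_pow_div_two {n : ℕ} (hn : n ≠ 0) {a μ η x : ℝ} (ha : 0 < a) (hμ : 0 ≤ μ)
    (hη : |η| * a ≤ μ * a ^ n / 2) (hx : a ≤ x) : |η * x| ≤ μ * x ^ n / 2 := by
  have hx0 : 0 < x := ha.trans_le hx
  obtain ⟨m, rfl⟩ : ∃ m, n = m + 1 := Nat.exists_eq_succ_of_ne_zero hn
  have hη' : |η| ≤ μ * a ^ m / 2 := by
    refine le_of_mul_le_mul_right (hη.trans_eq ?_) ha
    ring
  calc |η * x| = |η| * x := by rw [abs_mul, abs_of_pos hx0]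
    _ ≤ μ * x ^ m / 2 * x := by gcongr; exact hη'.trans (by gcongr)
    _ = μ * x ^ (m + 1) / 2 := by ring

lemma integral_Ioi_pow_inv_mul_inv {n : ℕ} (hn : n ≠ 0) {a : ℝ} (ha : 0 < a) :
    IntegrableOn (fun x : ℝ => (x ^ n)⁻¹ * x⁻¹) (Set.Ioi a) ∧
      ∫ x in Set.Ioi a, (x ^ n)⁻¹ * x⁻¹ = (n * a ^ n)⁻¹ := by
  have hn' : -(n : ℝ) - 1 < -1 := by
    have : (0 : ℝ) < n := by positivity
    linarith
  have hrpow : Set.EqOn (fun x : ℝ => x ^ (-(n : ℝ) - 1)) (fun x => (x ^ n)⁻¹ * x⁻¹)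
      (Set.Ioi a) := fun x hx => by
    have hx0 : 0 < x := ha.trans hx
    simp only [Real.rpow_sub_one hx0.ne', Real.rpow_neg hx0.le, Real.rpow_natCast, div_eq_mul_inv]
  refine ⟨(integrableOn_Ioi_rpow_of_lt hn' ha).congr_fun hrpow measurableSet_Ioi, ?_⟩
  rw [← setIntegral_congr_fun measurableSet_Ioi hrpow, integral_Ioi_rpow_of_lt hn' ha,
    sub_add_cancel, Real.rpow_neg ha.le, Real.rpow_natCast, neg_div_neg_eq, mul_inv, mul_comm]
  rfl

lemma integrableOn_Ioi_of_norm_le_pow_inv_mul_inv {n : ℕ} (hn : n ≠ 0) {a K : ℝ} (ha : 0 < a)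
    (hK : 0 ≤ K) {f : ℝ → ℂ} (hf : Measurable f)
    (hle : ∀ x ∈ Set.Ioi a, ‖f x‖ ≤ K * ((x ^ n)⁻¹ * x⁻¹)) :
    IntegrableOn f (Set.Ioi a) ∧ ∫ x in Set.Ioi a, ‖f x‖ ≤ K / a ^ n := by
  obtain ⟨hint, hval⟩ := integral_Ioi_pow_inv_mul_inv hn ha
  have hf_int : IntegrableOn f (Set.Ioi a) := (hint.const_mul K).mono' hf.aestronglyMeasurable
    (ae_restrict_of_forall_mem measurableSet_Ioi hle)
  refine ⟨hf_int, ?_⟩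
  calc ∫ x in Set.Ioi a, ‖f x‖ ≤ ∫ x in Set.Ioi a, K * ((x ^ n)⁻¹ * x⁻¹) :=
        setIntegral_mono_on hf_int.norm (hint.const_mul K) measurableSet_Ioi hle
    _ = K / (n * a ^ n) := by rw [integral_const_mul, hval, div_eq_mul_inv]
    _ ≤ K / a ^ n := by
        have : (1 : ℝ) ≤ n := mod_cast Nat.one_le_iff_ne_zero.2 hn
        gcongr
        exact le_mul_of_one_le_left (by positivity) this

/-- For the phase `ψ x = μ * x ^ n + η * x`, the function `x ↦ x * ψ' x`. Dividing by it turns the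
amplitude `ρ x / x` into `f x * ψ' x` with `f = ρ / eulerPhase n μ η`. -/
def eulerPhase (n : ℕ) (μ η x : ℝ) : ℝ :=
  n * (μ * x ^ n) + η * x

lemma hasDerivAt_eulerPhase (n : ℕ) (μ η x : ℝ) :
    HasDerivAt (eulerPhase n μ η) (n * (μ * (n * x ^ (n - 1))) + η) x :=
  ((((hasDerivAt_pow n x).const_mul μ).const_mul _).add
    ((hasDerivAt_id' x).const_mul η)).congr_deriv (by rw [mul_one])

lemma hasDerivAt_mul_pow_add_mul {n : ℕ} (hn : n ≠ 0) (μ η : ℝ) {x : ℝ} (hx : x ≠ 0) :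
    HasDerivAt (fun x => μ * x ^ n + η * x) (eulerPhase n μ η x / x) x := by
  refine (((hasDerivAt_pow n x).const_mul μ).add ((hasDerivAt_id' x).const_mul η)).congr_deriv ?_
  rw [eulerPhase, eq_div_iff hx, ← mul_pow_sub_one hn x]
  ring

section Amplitude

variable {n : ℕ} {μ η x B : ℝ} {ρ : ℝ → ℂ}

lemma mul_pow_div_two_le_eulerPhase (hn : n ≠ 0) (hM : 0 ≤ μ * x ^ n)
    (he : |η * x| ≤ μ * x ^ n / 2) : μ * x ^ n / 2 ≤ eulerPhase n μ η x := by
  have hn1 : (1 : ℝ) ≤ n := mod_cast Nat.one_le_iff_ne_zero.2 hn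
  exact (by nlinarith : _ ≤ n * (μ * x ^ n) / 2).trans (mul_div_two_le_mul_add hn1 hM he)

lemma eulerPhase_pos (hn : n ≠ 0) (hM : 0 < μ * x ^ n) (he : |η * x| ≤ μ * x ^ n / 2) :
    0 < eulerPhase n μ η x :=
  (half_pos hM).trans_le (mul_pow_div_two_le_eulerPhase hn hM.le he)

lemma norm_div_eulerPhase_le (hn : n ≠ 0) (hM : 0 < μ * x ^ n) (he : |η * x| ≤ μ * x ^ n / 2)
    (hB : ‖ρ x‖ ≤ B) : ‖ρ x / eulerPhase n μ η x‖ ≤ 2 * B / (μ * x ^ n) := by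
  have hD := mul_pow_div_two_le_eulerPhase hn hM.le he
  rw [norm_div, Complex.norm_real, Real.norm_of_nonneg (eulerPhase_pos hn hM he).le]
  calc ‖ρ x‖ / eulerPhase n μ η x ≤ B / (μ * x ^ n / 2) :=
        div_le_div₀ ((norm_nonneg _).trans hB) hB (half_pos hM) hD
    _ = 2 * B / (μ * x ^ n) := by ring

lemma norm_deriv_div_eulerPhase_le (hn : n ≠ 0) (hx : 0 < x) (hμ : 0 < μ)
    (he : |η * x| ≤ μ * x ^ n / 2) (hρ : DifferentiableAt ℝ ρ x) (hB : ‖ρ x‖ ≤ B)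
    (hB' : ‖x * deriv ρ x‖ ≤ B) :
    ‖deriv (fun x => ρ x / eulerPhase n μ η x) x‖ ≤ 8 * B / μ * ((x ^ n)⁻¹ * x⁻¹) := by
  have hM : 0 < μ * x ^ n := mul_pos hμ (pow_pos hx n)
  have hD := eulerPhase_pos hn hM he
  have hderiv : HasDerivAt (fun x => ρ x / eulerPhase n μ η x) _ x := hρ.hasDerivAt.div
    (hasDerivAt_eulerPhase n μ η x).ofReal_comp (Complex.ofReal_ne_zero.2 hD.ne')
  rw [hderiv.deriv]
  refine (norm_sub_div_sq_le hx hM (mod_cast Nat.one_le_iff_ne_zero.2 hn) he rfl ?_ hB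
    hB').trans_eq (by ring)
  rw [← mul_pow_sub_one hn x]
  ring

lemma integrableOn_deriv_div_eulerPhase {a : ℝ} (hn : n ≠ 0) (ha : 0 < a) (hμ : 0 < μ)
    (hη : |η| * a ≤ μ * a ^ n / 2) (hρ : Differentiable ℝ ρ) (hB : ∀ x, a ≤ x → ‖ρ x‖ ≤ B)
    (hB' : ∀ x : ℝ, a ≤ x → ‖x * deriv ρ x‖ ≤ B) :
    IntegrableOn (deriv fun x => ρ x / eulerPhase n μ η x) (Set.Ioi a) ∧
      ∫ x in Set.Ioi a, ‖deriv (fun x => ρ x / eulerPhase n μ η x) x‖ ≤ 8 * B / μ / a ^ n := by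
  have hB0 : 0 ≤ B := (norm_nonneg _).trans (hB a le_rfl)
  refine integrableOn_Ioi_of_norm_le_pow_inv_mul_inv hn ha (by positivity) (measurable_deriv _)
    fun x hx => ?_
  have hax : a ≤ x := le_of_lt hx
  exact norm_deriv_div_eulerPhase_le hn (ha.trans hx) hμ
    (abs_mul_le_mul_pow_div_two hn ha hμ.le hη hax) (hρ x) (hB x hax) (hB' x hax)

end Amplitude

theorem exists_tendsto_integral_div_mul_ee_pow {n : ℕ} (hn : n ≠ 0) {ρ : ℝ → ℂ} {a μ η B : ℝ}
    (ha : 0 < a) (hμ : 0 < μ) (hη : |η| * a ≤ μ * a ^ n / 2) (hρ : Differentiable ℝ ρ)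
    (hB : ∀ x, a ≤ x → ‖ρ x‖ ≤ B) (hB' : ∀ x : ℝ, a ≤ x → ‖x * deriv ρ x‖ ≤ B) :
    ∃ L, Tendsto (fun R => ∫ x in a..R, ρ x / x * ee (μ * x ^ n + η * x)) atTop (𝓝 L) ∧
      ‖L‖ ≤ 2 * B / (μ * a ^ n) := by
  have hx0 {x : ℝ} (hx : a ≤ x) : 0 < x := ha.trans_le hx
  have hM {x : ℝ} (hx : a ≤ x) : 0 < μ * x ^ n := mul_pos hμ (pow_pos (hx0 hx) n)
  have he {x : ℝ} (hx : a ≤ x) : |η * x| ≤ μ * x ^ n / 2 :=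
    abs_mul_le_mul_pow_div_two hn ha hμ.le hη hx
  have hD0 {x : ℝ} (hx : a ≤ x) : (eulerPhase n μ η x : ℂ) ≠ 0 :=
    Complex.ofReal_ne_zero.2 (eulerPhase_pos hn (hM hx) (he hx)).ne'
  set f : ℝ → ℂ := fun x => ρ x / eulerPhase n μ η x with hf
  have hf_deriv (x : ℝ) (hx : a ≤ x) : HasDerivAt f (deriv f x) x :=
    ((hρ x).div (hasDerivAt_eulerPhase n μ η x).ofReal_comp.differentiableAt
      (hD0 hx)).hasDerivAt
  have hf_le (x : ℝ) (hx : a ≤ x) : ‖f x‖ ≤ 2 * B / (μ * x ^ n) :=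
    norm_div_eulerPhase_le hn (hM hx) (he hx) (hB x hx)
  obtain ⟨hf'_int, hf'_norm⟩ := integrableOn_deriv_div_eulerPhase hn ha hμ hη hρ hB hB'
  have hB0 : 0 ≤ B := (norm_nonneg _).trans (hB a le_rfl)
  have hlim : Tendsto f atTop (𝓝 0) :=
    squeeze_zero_norm' ((eventually_ge_atTop a).mono hf_le)
      (((tendsto_pow_atTop hn).const_mul_atTop hμ).const_div_atTop _)
  have hψ'_cont : ContinuousOn (fun x => eulerPhase n μ η x / x) (Set.Ici a) := fun x hx =>
    ((hasDerivAt_eulerPhase n μ η x).continuousAt.div continuousAt_id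
      (hx0 hx).ne').continuousWithinAt
  obtain ⟨L, hL, hL_le⟩ := exists_tendsto_integral_mul_ee hf_deriv
    (fun x hx => hasDerivAt_mul_pow_add_mul hn μ η (hx0 hx).ne') hψ'_cont hf'_int hlim
  refine ⟨L, hL.congr' ((eventually_ge_atTop a).mono fun R hR =>
    intervalIntegral.integral_congr fun x hx => ?_), ?_⟩
  · rw [Set.uIcc_of_le hR] at hx
    have := hD0 hx.1
    simp only [hf, Complex.ofReal_div]
    field_simp
  · calc ‖L‖ ≤ (2 * Real.pi)⁻¹ * (2 * B / (μ * a ^ n) + 8 * B / μ / a ^ n) := by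
          refine hL_le.trans ?_
          gcongr
          exact hf_le a le_rfl
      _ = 5 / Real.pi * (B / (μ * a ^ n)) := by
          field_simp
          ring
      _ ≤ 2 * (B / (μ * a ^ n)) := by
          gcongr
          rw [div_le_iff₀ Real.pi_pos]
          linarith [Real.pi_gt_three]
      _ = 2 * B / (μ * a ^ n) := by ring

lemma exists_norm_one_sub_le_and_norm_mul_deriv_le {φ : ℝ → ℂ} (hφ : ContDiff ℝ 1 φ)
    (hc : HasCompactSupport φ) : ∃ B : ℝ, ∀ r y : ℝ, ‖1 - φ (r * y)‖ ≤ B ∧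
      ‖y * deriv (fun y => 1 - φ (r * y)) y‖ ≤ B := by
  obtain ⟨B₀, hB₀⟩ := hc.exists_bound_of_continuous hφ.continuous
  obtain ⟨B₁, hB₁⟩ := (hc.deriv.mul_left (f := fun y : ℝ => (y : ℂ))).exists_bound_of_continuous
    (Complex.continuous_ofReal.mul (hφ.continuous_deriv le_rfl))
  refine ⟨max (1 + B₀) B₁, fun r y => ⟨le_max_of_le_left ?_, le_max_of_le_right ?_⟩⟩
  · refine (norm_sub_le _ _).trans ?_
    rw [norm_one]
    gcongr
    exact hB₀ _
  · rw [deriv_const_sub, deriv_comp_mul_left r φ, mul_neg, norm_neg, Complex.real_smul,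
      mul_left_comm, ← mul_assoc, ← Complex.ofReal_mul]
    exact hB₁ (r * y)

theorem exists_tendsto_integral_one_sub_div_mul_ee_pow {n : ℕ} (hn : n ≠ 0) {φ : ℝ → ℂ}
    (hφ : ContDiff ℝ 1 φ) (hc : HasCompactSupport φ) (h1 : φ =ᶠ[𝓝 0] 1) :
    ∃ C κ : ℝ, 0 < κ ∧ ∀ r t η : ℝ, r ≠ 0 → 0 < t → |η| ≤ κ * (|r| * (t / |r| ^ n)) →
      ∃ L, Tendsto (fun R => ∫ y in 0..R, (1 - φ (r * y)) / y * ee (t * y ^ n + η * y))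
        atTop (𝓝 L) ∧ ‖L‖ ≤ C * (|r| ^ n / t) := by
  obtain ⟨ε, hε, hball⟩ := Metric.nhds_basis_closedBall.eventually_iff.1 h1
  obtain ⟨B, hB⟩ := exists_norm_one_sub_le_and_norm_mul_deriv_le hφ hc
  refine ⟨2 * B / ε ^ n, ε ^ n / (2 * ε), by positivity, fun r t η hr ht hη => ?_⟩
  replace hr : 0 < |r| := abs_pos.2 hr
  have ha : 0 < ε / |r| := by positivity
  have hη' : |η| * (ε / |r|) ≤ t * (ε / |r|) ^ n / 2 := by
    calc |η| * (ε / |r|) ≤ ε ^ n / (2 * ε) * (|r| * (t / |r| ^ n)) * (ε / |r|) := by gcongr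
      _ = t * (ε / |r|) ^ n / 2 := by
        rw [div_pow]
        field_simp
  have hρ : Differentiable ℝ fun y => 1 - φ (r * y) :=
    ((hφ.differentiable one_ne_zero).comp (differentiable_id.const_mul r)).const_sub 1
  obtain ⟨L, hL, hL_le⟩ := exists_tendsto_integral_div_mul_ee_pow hn ha ht hη' hρ
    (fun x _ => (hB r x).1) (fun x _ => (hB r x).2)
  have hzero (y : ℝ) (hy0 : 0 < y) (hy : y ≤ ε / |r|) : φ (r * y) = 1 := by
    refine hball (mem_closedBall_zero_iff.2 ?_)
    rwa [norm_mul, Real.norm_eq_abs, Real.norm_of_nonneg hy0.le, ← le_div_iff₀' hr]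
  refine ⟨L, hL.congr' ((eventually_ge_atTop (ε / |r|)).mono fun R hR => ?_), hL_le.trans_eq ?_⟩
  · simp only [intervalIntegral.integral_of_le hR,
      intervalIntegral.integral_of_le (ha.le.trans hR)]
    refine (setIntegral_eq_of_subset_of_forall_sdiff_eq_zero measurableSet_Ioc
      (Set.Ioc_subset_Ioc_left ha.le) fun y hy => ?_).symm
    rw [hzero y hy.1.1 (not_lt.1 fun h => hy.2 ⟨h, hy.1.2⟩), sub_self, zero_div, zero_mul]
  · rw [div_pow]
    field_simp

end Oscillatory

section PrincipalValue

open FourierTransform Topology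

lemma intervalIntegral_eq_two_mul_of_even {f : ℝ → ℂ} (hf : Continuous f) (heven : f.Even)
    (R : ℝ) : ∫ y in (-R)..R, f y = 2 * ∫ y in 0..R, f y := by
  have hneg : ∫ y in (-R)..0, f y = ∫ y in 0..R, f y := by
    have := intervalIntegral.integral_comp_neg (a := 0) (b := R) f
    rw [neg_zero] at this
    rw [← this]
    exact intervalIntegral.integral_congr fun y _ => heven y
  rw [← intervalIntegral.integral_add_adjacent_intervals (hf.intervalIntegrable (-R) 0)
    (hf.intervalIntegrable 0 R), hneg, two_mul]

lemma mul_sinc_mul {y : ℝ} (c : ℝ) (hy : y ≠ 0) : c * Real.sinc (c * y) = Real.sin (c * y) / y := by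
  rcases eq_or_ne c 0 with rfl | hc
  · simp
  · rw [Real.sinc_of_ne_zero (mul_ne_zero hc hy)]
    field_simp

variable {n : ℕ}

lemma Iint_eq_integral_sinc (hn : n ≠ 0) (s R : ℝ) :
    Iint n s R = ∫ y in (-R)..R,
      ee (y ^ n) * ↑(2 * Real.pi * s * Real.sinc (2 * Real.pi * s * y)) := by
  refine intervalIntegral.integral_congr fun y _ => ?_
  rcases eq_or_ne y 0 with rfl | hy
  · simp [hn]
  · rw [if_neg hy, mul_sinc_mul _ hy, Complex.ofReal_div, mul_div_assoc]

lemma I_mul_Iint_mul (hne : Even n) (hn : n ≠ 0) (s b R : ℝ) :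
    Complex.I * Iint n s (b * R) = ∫ y in 0..R,
      ee (b ^ n * y ^ n) * (ee (s * b * y) - ee (-(s * b * y))) / (y : ℂ) := by
  set F : ℝ → ℂ := fun y => ee (y ^ n) * ↑(2 * Real.pi * s * Real.sinc (2 * Real.pi * s * y))
    with hF
  have hF_even : F.Even := fun y => by simp [hF, hne.neg_pow]
  have hscale : ∫ y in 0..b * R, F y = b * ∫ y in 0..R, F (b * y) := by
    rw [← Complex.real_smul, intervalIntegral.smul_integral_comp_mul_left, mul_zero]
  rw [Iint_eq_integral_sinc hn, intervalIntegral_eq_two_mul_of_even (by fun_prop) hF_even, hscale,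
    ← mul_assoc, ← mul_assoc, ← intervalIntegral.integral_const_mul]
  refine intervalIntegral.integral_congr_ae ((Measure.ae_ne volume 0).mono fun y hy _ => ?_)
  have hsinc : b * (2 * Real.pi * s * Real.sinc (2 * Real.pi * s * (b * y))) =
      Real.sin (2 * Real.pi * (s * b * y)) / y := by
    have := mul_sinc_mul (2 * Real.pi * s * b) hy
    rw [← mul_assoc (2 * Real.pi * s), ← mul_assoc, mul_comm b, this]
    ring_nf
  rw [ee_sub_ee_neg, hF, mul_assoc, mul_left_comm (b : ℂ), ← Complex.ofReal_mul, hsinc, mul_pow,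
    Complex.ofReal_div]
  ring

variable {φ : ℝ → ℂ}

lemma intervalIntegrable_one_sub_div_mul_ee_pow (hφ : ContDiff ℝ 1 φ) (h0 : φ 0 = 1) (n : ℕ)
    (r t η a b : ℝ) :
    IntervalIntegrable (fun y => (1 - φ (r * y)) / y * ee (t * y ^ n + η * y)) volume a b := by
  have hρ : Differentiable ℝ fun y => 1 - φ (r * y) :=
    ((hφ.differentiable one_ne_zero).comp (differentiable_id.const_mul r)).const_sub 1
  have hloc := locallyIntegrable_div_self hρ.continuous (hρ 0) (by simp [h0])
  refine IntervalIntegrable.mul_continuousOn ?_ (by fun_prop)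
  exact (hloc.integrableOn_isCompact isCompact_uIcc).intervalIntegrable

lemma integrable_cutoffPhase_sub_comp_neg_div (hφ : ContDiff ℝ (⊤ : ℕ∞) φ)
    (hc : HasCompactSupport φ) {r : ℝ} (hr : r ≠ 0) (n : ℕ) (t σ : ℝ) :
    Integrable fun y : ℝ => (cutoffPhase φ n r t y * ee (σ * y) -
      cutoffPhase φ n r t (-y) * ee (-(σ * y))) / (y : ℂ) := by
  simpa using integrable_sub_comp_neg_div
    ((contDiff_mul_ee (contDiff_cutoffPhase hφ n r t) contDiff_id σ).differentiable (by simp))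
    (hasCompactSupport_cutoffPhase hc hr n t).mul_right

lemma I_mul_Iint_mul_eq_add (hφ : ContDiff ℝ (⊤ : ℕ∞) φ) (hc : HasCompactSupport φ) (h0 : φ 0 = 1)
    (hne : Even n) (hn : n ≠ 0) {r : ℝ} (hr : r ≠ 0) (s b R : ℝ) :
    Complex.I * Iint n s (b * R) =
      (∫ y in 0..R, (cutoffPhase φ n r (b ^ n) y * ee (s * b * y) -
        cutoffPhase φ n r (b ^ n) (-y) * ee (-(s * b * y))) / (y : ℂ)) +
      ((∫ y in 0..R, (1 - φ (r * y)) / y * ee (b ^ n * y ^ n + s * b * y)) -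
        ∫ y in 0..R, (1 - φ (-r * y)) / y * ee (b ^ n * y ^ n + -(s * b) * y)) := by
  have hφ' : ContDiff ℝ 1 φ := hφ.of_le (by simp)
  have hint₁ := intervalIntegrable_one_sub_div_mul_ee_pow hφ' h0 n r (b ^ n) (s * b) 0 R
  have hint₂ := intervalIntegrable_one_sub_div_mul_ee_pow hφ' h0 n (-r) (b ^ n) (-(s * b)) 0 R
  rw [I_mul_Iint_mul hne hn, ← intervalIntegral.integral_sub hint₁ hint₂,
    ← intervalIntegral.integral_add (integrable_cutoffPhase_sub_comp_neg_div hφ hc hr n (b ^ n)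
      (s * b)).intervalIntegrable (hint₁.sub hint₂)]
  refine intervalIntegral.integral_congr fun y _ => ?_
  simp only [cutoffPhase, ee_add, hne.neg_pow, mul_neg, neg_mul]
  ring

lemma tendsto_I_mul_Iint (hφ : ContDiff ℝ (⊤ : ℕ∞) φ) (hc : HasCompactSupport φ) (h0 : φ 0 = 1)
    (hne : Even n) (hn : n ≠ 0) {r s b : ℝ} {L₁ L₂ : ℂ} (hr : r ≠ 0) (hb : 0 < b)
    (hL₁ : Tendsto (fun R => ∫ y in 0..R, (1 - φ (r * y)) / y * ee (b ^ n * y ^ n + s * b * y))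
      atTop (𝓝 L₁))
    (hL₂ : Tendsto (fun R => ∫ y in 0..R,
      (1 - φ (-r * y)) / y * ee (b ^ n * y ^ n + -(s * b) * y)) atTop (𝓝 L₂)) :
    Tendsto (fun R => Complex.I * Iint n s R) atTop
      (𝓝 ((∫ y in Set.Ioi 0, (cutoffPhase φ n r (b ^ n) y * ee (s * b * y) -
        cutoffPhase φ n r (b ^ n) (-y) * ee (-(s * b * y))) / (y : ℂ)) + (L₁ - L₂))) := by
  have hscaled := (intervalIntegral_tendsto_integral_Ioi 0
    (integrable_cutoffPhase_sub_comp_neg_div hφ hc hr n (b ^ n) (s * b)).integrableOn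
    tendsto_id).add (hL₁.sub hL₂)
  simp only [id_eq, ← I_mul_Iint_mul_eq_add hφ hc h0 hne hn hr] at hscaled
  simpa [Function.comp_def, mul_div_cancel₀ _ hb.ne'] using
    hscaled.comp (tendsto_id.atTop_div_const hb)

theorem exists_norm_integral_Ioi_fourierInv_cutoffPhase_sub_le (hφ : ContDiff ℝ (⊤ : ℕ∞) φ)
    (hc : HasCompactSupport φ) (h1 : φ =ᶠ[𝓝 0] 1) (hne : Even n) (hn : n ≠ 0) :
    ∃ C κ : ℝ, 0 < κ ∧ ∀ r b s : ℝ, 0 < r → 0 < b → |s * b| ≤ κ * (r * (b ^ n / r ^ n)) →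
      ∃ Is, Tendsto (fun R : ℝ => Complex.ofReal (1 / (2 * Real.pi)) * Iint n s R) atTop (𝓝 Is) ∧
        ‖(∫ v in Set.Ioi (s * b), 𝓕⁻ (cutoffPhase φ n r (b ^ n)) v) - (1 / 2 - Is)‖ ≤
          C * (r ^ n / b ^ n) := by
  obtain ⟨C, κ, hκ, htail⟩ :=
    exists_tendsto_integral_one_sub_div_mul_ee_pow hn (hφ.of_le (by simp)) hc h1
  refine ⟨C, κ, hκ, fun r b s hr hb hs => ?_⟩
  have hbn : 0 < b ^ n := pow_pos hb n
  have h0 : φ 0 = 1 := h1.self_of_nhds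
  obtain ⟨L₁, hL₁, hL₁_le⟩ := htail r (b ^ n) (s * b) hr.ne' hbn (by rwa [abs_of_pos hr])
  obtain ⟨L₂, hL₂, hL₂_le⟩ := htail (-r) (b ^ n) (-(s * b)) (neg_ne_zero.2 hr.ne') hbn
    (by rwa [abs_neg, abs_neg, abs_of_pos hr])
  rw [abs_of_pos hr] at hL₁_le
  rw [abs_neg, abs_of_pos hr] at hL₂_le
  have hIint := tendsto_I_mul_Iint hφ hc h0 hne hn hr.ne' hb hL₁ hL₂
  have hplemelj := integral_Ioi_fourierInv_of_hasCompactSupport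
    (contDiff_cutoffPhase hφ n r (b ^ n)) (hasCompactSupport_cutoffPhase hc hr.ne' n _) (s * b)
  have hg0 : cutoffPhase φ n r (b ^ n) 0 = 1 := by simp [cutoffPhase, h0, hn]
  set P := ∫ y in Set.Ioi (0 : ℝ), (cutoffPhase φ n r (b ^ n) y * ee (s * b * y) -
    cutoffPhase φ n r (b ^ n) (-y) * ee (-(s * b * y))) / (y : ℂ)
  refine ⟨(2 * Real.pi * Complex.I)⁻¹ * (P + (L₁ - L₂)),
    (hIint.const_mul _).congr fun R => ?_, ?_⟩
  · push_cast
    field_simp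
  · have hdiff : (∫ v in Set.Ioi (s * b), 𝓕⁻ (cutoffPhase φ n r (b ^ n)) v) -
        (1 / 2 - (2 * Real.pi * Complex.I)⁻¹ * (P + (L₁ - L₂))) =
        (2 * Real.pi * Complex.I)⁻¹ * (L₁ - L₂) := by
      rw [hplemelj, hg0]
      ring
    have h2π : ‖(2 * Real.pi * Complex.I : ℂ)⁻¹‖ ≤ 1 / 2 := by
      rw [norm_inv, norm_mul, norm_mul, Complex.norm_I, Complex.norm_real,
        Real.norm_of_nonneg Real.pi_pos.le, Complex.norm_ofNat, one_div, mul_one]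
      gcongr
      linarith [Real.pi_gt_three]
    rw [hdiff, norm_mul]
    calc _ ≤ 1 / 2 * (C * (r ^ n / b ^ n) + C * (r ^ n / b ^ n)) := by
          gcongr
          exact (norm_sub_le _ _).trans (add_le_add hL₁_le hL₂_le)
      _ = C * (r ^ n / b ^ n) := by ring

end PrincipalValue

section ThetaSum

open FourierTransform Topology

variable {n : ℕ} {γ α : ℝ} {φ : ℝ → ℝ}

lemma integral_cutoffPhase_mul_ee (n : ℕ) (γ σ r t : ℝ) (φ : ℝ → ℝ) {y : ℝ} (hy : y ≠ 0) :
    ∫ v in σ..(2 * γ + σ), cutoffPhase (fun y => (φ y : ℂ)) n r t y * ee (v * y) =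
      Complex.ofReal (1 / Real.pi) * (Complex.ofReal (φ (y * r) *
        (Real.sin (2 * Real.pi * γ * y) / y)) * ee (t * y ^ n + (γ + σ) * y)) := by
  have hsin : ee ((2 * γ + σ) * y) - ee (σ * y) =
      ee ((γ + σ) * y) * (2 * Complex.I * Real.sin (2 * Real.pi * γ * y)) := by
    rw [mul_assoc (2 * Real.pi), ← ee_sub_ee_neg, mul_sub, ← ee_add, ← ee_add]
    ring_nf
  have : (y : ℂ) ≠ 0 := mod_cast hy
  rw [intervalIntegral.integral_const_mul, integral_ee_mul_right _ _ hy, hsin, cutoffPhase, ee_add,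
    mul_comm r]
  push_cast
  field_simp

lemma Ustar_eq_integral (hn : n ≠ 0) (hc : HasCompactSupport φ) (h0 : φ 0 = 1) (γ α σ : ℝ) {t : ℝ}
    (ht : 0 < t) : Ustar n γ φ α t (γ + σ) = ∫ v in σ..(2 * γ + σ),
      ∑' k : ℤ, cutoffPhase (fun y => (φ y : ℂ)) n (t ^ α) t k * ee (v * k) := by
  set g := cutoffPhase (fun y => (φ y : ℂ)) n (t ^ α) t with hg
  have hgc : HasCompactSupport g :=
    hasCompactSupport_cutoffPhase (hc.comp_left Complex.ofReal_zero) (by positivity) n t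
  have hg0 : g 0 = 1 := by simp [hg, cutoffPhase, h0, hn]
  set F := (finite_setOf_intCast_ne_zero hgc).toFinset with hF
  have h0F : (0 : ℤ) ∈ F := by simp [hF, hg0]
  have hout (k : ℤ) (hk : k ∉ F) : φ (k * t ^ α) = 0 := by
    have hgk : g k = 0 := by simpa [hF] using hk
    have hee : ee (t * (k : ℝ) ^ n) ≠ 0 := norm_ne_zero_iff.1 (by simp)
    rw [mul_comm]
    exact Complex.ofReal_eq_zero.1 ((mul_eq_zero.1 hgk).resolve_right hee)
  have hzero : ∫ v in σ..(2 * γ + σ), g (0 : ℤ) * ee (v * (0 : ℤ)) = Complex.ofReal (2 * γ) := by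
    simp [hg0]
  simp only [tsum_mul_ee_eq_sum hgc]
  rw [intervalIntegral.integral_finsetSum fun k _ =>
    Continuous.intervalIntegrable (by fun_prop) _ _, Ustar,
    tsum_eq_sum (s := F) fun k hk => by rw [hout k hk]; simp,
    ← add_sum_erase F _ h0F, ← add_sum_erase F _ h0F, hzero, mul_add, mul_sum]
  simp only [Int.cast_zero, mul_zero, div_zero, Complex.ofReal_zero, zero_mul, zero_add]
  congr 1
  refine sum_congr rfl fun k hk => ?_
  rw [hg, integral_cutoffPhase_mul_ee _ _ _ _ _ _ (Int.cast_ne_zero.2 (ne_of_mem_erase hk))]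

theorem exists_norm_Ustar_sub_integral_Ioi_le (hφ : ContDiff ℝ (⊤ : ℕ∞) φ)
    (hc : HasCompactSupport φ) (h0 : φ 0 = 1) (hn : n ≠ 0) (hγ : γ ∈ Set.Ioo (0 : ℝ) (1 / 2))
    (hαn : 1 ≤ α * n) (hαn' : α * (n - 1) < 1) :
    ∃ C, ∃ c > 0, ∀ t ∈ Set.Ioc (0 : ℝ) 1, ∀ σ, |σ| ≤ c →
      ‖Ustar n γ φ α t (γ + σ) -
        ∫ v in Set.Ioi σ, 𝓕⁻ (cutoffPhase (fun y => (φ y : ℂ)) n (t ^ α) t) v‖ ≤ C * t := by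
  obtain ⟨hγ0, hγ1⟩ := hγ
  have hφ' : ContDiff ℝ (⊤ : ℕ∞) fun y => (φ y : ℂ) := Complex.ofRealCLM.contDiff.comp hφ
  have hc' : HasCompactSupport fun y => (φ y : ℂ) := hc.comp_left Complex.ofReal_zero
  obtain ⟨c, hc0, hcγ, hcγ'⟩ : ∃ c > 0, c ≤ γ ∧ c ≤ (1 - 2 * γ) / 2 :=
    ⟨min γ ((1 - 2 * γ) / 2), lt_min hγ0 (by linarith), min_le_left _ _, min_le_right _ _⟩
  obtain ⟨K, hK⟩ := exists_norm_fourierInv_cutoffPhase_le hφ' hc' hαn hαn' hc0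
  refine ⟨K * (2 / c ^ 2 * (∑' m : ℤ, 1 / (m : ℝ) ^ 2) + 1 / c), c, hc0, fun t ht σ hσ => ?_⟩
  obtain ⟨hσ₁, hσ₂⟩ := abs_le.1 hσ
  rw [Ustar_eq_integral hn hc h0 γ α σ ht.1, mul_right_comm]
  exact norm_integral_tsum_sub_integral_Ioi_le (contDiff_cutoffPhase hφ' n _ t)
    (hasCompactSupport_cutoffPhase hc' (Real.rpow_pos_of_pos ht.1 α).ne' n t) hc0 (hK t ht)
    (by linarith) (by linarith) (by linarith) (by linarith)

lemma eventually_mul_rpow_le (S : ℝ) {κ p q : ℝ} (hκ : 0 < κ) (hpq : p < q) :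
    ∀ᶠ t in 𝓝[>] (0 : ℝ), S * t ^ q ≤ κ * t ^ p := by
  have hlim : Tendsto (fun t : ℝ => S * t ^ (q - p)) (𝓝[>] 0) (𝓝 0) :=
    (((Real.continuous_rpow_const (sub_pos.2 hpq).le).const_mul S).tendsto' 0 0
      (by simp [(sub_pos.2 hpq).ne'])).mono_left nhdsWithin_le_nhds
  filter_upwards [hlim.eventually_le_const hκ, self_mem_nhdsWithin] with t ht ht0
  calc S * t ^ q = S * t ^ (q - p) * t ^ p := by
        rw [mul_assoc, ← Real.rpow_add ht0, sub_add_cancel]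
    _ ≤ κ * t ^ p := by
        have := Real.rpow_nonneg (le_of_lt ht0) p
        gcongr

lemma exists_norm_integral_Ioi_fourierInv_rpow_sub_le (hφ : ContDiff ℝ (⊤ : ℕ∞) φ)
    (hc : HasCompactSupport φ) (h1 : φ =ᶠ[𝓝 0] 1) (hne : Even n) (hn : n ≠ 0) (α : ℝ) :
    ∃ C κ, 0 < κ ∧ ∀ t s, 0 < t → |s * t ^ (n : ℝ)⁻¹| ≤ κ * t ^ (1 - α * (n - 1)) →
      ∃ Is : ℂ,
        Tendsto (fun R : ℝ => Complex.ofReal (1 / (2 * Real.pi)) * Iint n s R) atTop (𝓝 Is) ∧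
        ‖(∫ v in Set.Ioi (s * t ^ (n : ℝ)⁻¹),
          𝓕⁻ (cutoffPhase (fun y => (φ y : ℂ)) n (t ^ α) t) v) - (1 / 2 - Is)‖ ≤
            C * t ^ (α * n - 1) := by
  obtain ⟨C, κ, hκ, hI⟩ := exists_norm_integral_Ioi_fourierInv_cutoffPhase_sub_le
    (φ := fun y => (φ y : ℂ)) (Complex.ofRealCLM.contDiff.comp hφ)
    (hc.comp_left Complex.ofReal_zero) (h1.mono fun y hy => by simp [hy]) hne hn
  refine ⟨C, κ, hκ, fun t s ht hs => ?_⟩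
  have hb : (t ^ (n : ℝ)⁻¹) ^ n = t := Real.rpow_inv_natCast_pow ht.le hn
  have hr : (t ^ α) ^ n / t = t ^ (α * n - 1) := by
    rw [← Real.rpow_mul_natCast ht.le, Real.rpow_sub_one ht.ne']
  have hIs := hI (t ^ α) (t ^ (n : ℝ)⁻¹) s (Real.rpow_pos_of_pos ht _) (Real.rpow_pos_of_pos ht _)
  rw [hb, rpow_mul_div_rpow_pow ht, hr] at hIs
  exact hIs hs

theorem exists_eventually_norm_Ustar_sub_le (hne : Even n) (hγ : γ ∈ Set.Ioo (0 : ℝ) (1 / 2))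
    (hα : (n : ℝ)⁻¹ < α) (hα' : α < ((n : ℝ) - 1)⁻¹) (S : ℝ) (hφ : ContDiff ℝ (⊤ : ℕ∞) φ)
    (hc : HasCompactSupport φ) (h1 : φ =ᶠ[𝓝 0] 1) :
    ∃ C, ∀ᶠ t in 𝓝[>] (0 : ℝ), ∀ s ∈ Set.Icc (-S) S, ∃ Is : ℂ,
      Tendsto (fun R : ℝ => Complex.ofReal (1 / (2 * Real.pi)) * Iint n s R) atTop (𝓝 Is) ∧
      ‖Ustar n γ φ α t (γ + s * t ^ (n : ℝ)⁻¹) - (1 / 2 - Is)‖ ≤ C * t ^ (α * n - 1) := by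
  have hn1 : (1 : ℝ) < n :=
    sub_pos.1 (inv_pos.1 ((inv_nonneg.2 n.cast_nonneg).trans_lt (hα.trans hα')))
  have hn0 : (0 : ℝ) < n := zero_lt_one.trans hn1
  have hn : n ≠ 0 := Nat.cast_ne_zero.1 hn0.ne'
  have hαn : 1 < α * n := (inv_lt_iff_one_lt_mul₀ hn0).1 hα
  have hαn' : α * (n - 1) < 1 := (lt_mul_inv_iff₀ (sub_pos.2 hn1)).1 (by rwa [one_mul])
  have hexp : 1 - α * (n - 1) < (n : ℝ)⁻¹ := by
    have := mul_lt_mul_of_pos_right hα (sub_pos.2 hn1)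
    have := inv_mul_cancel₀ hn0.ne'
    linarith
  have hα1 : α * n - 1 ≤ 1 := by
    have hn2 : (2 : ℝ) ≤ n := mod_cast (mod_cast hn1 : 1 < n)
    nlinarith
  obtain ⟨C₁, c, hc0, hU⟩ :=
    exists_norm_Ustar_sub_integral_Ioi_le hφ hc h1.self_of_nhds hn hγ hαn.le hαn'
  obtain ⟨C₂, κ, hκ, hI⟩ :=
    exists_norm_integral_Ioi_fourierInv_rpow_sub_le hφ hc h1 hne hn α
  refine ⟨|C₁| + C₂, ?_⟩
  filter_upwards [eventually_mul_rpow_le S hc0 (inv_pos.2 hn0), eventually_mul_rpow_le S hκ hexp,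
    Ioc_mem_nhdsGT one_pos] with t htc htκ ht s hs
  have hσ : |s * t ^ (n : ℝ)⁻¹| ≤ S * t ^ (n : ℝ)⁻¹ := by
    rw [abs_mul, abs_of_pos (Real.rpow_pos_of_pos ht.1 _)]
    have := Real.rpow_pos_of_pos ht.1 (n : ℝ)⁻¹
    gcongr
    exact abs_le.2 hs
  obtain ⟨Is, hIs, hle⟩ := hI t s ht.1 (hσ.trans htκ)
  have htpow : t ≤ t ^ (α * n - 1) := by
    simpa using Real.rpow_le_rpow_of_exponent_ge ht.1 ht.2 hα1
  have hle' := hU t ht _ (hσ.trans (by simpa using htc))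
  refine ⟨Is, hIs, (norm_sub_le_norm_sub_add_norm_sub _ _ _).trans
    ((add_le_add hle' hle).trans ?_)⟩
  have ht0 : 0 ≤ t := ht.1.le
  rw [add_mul]
  gcongr
  exact le_abs_self C₁

theorem stmt19_general (hne : Even n) (hγ : γ ∈ Set.Ioo (0 : ℝ) (1 / 2)) (hα : (n : ℝ)⁻¹ < α)
    (hα' : α < ((n : ℝ) - 1)⁻¹) (S : ℝ) (hφ : ContDiff ℝ (⊤ : ℕ∞) φ) (hc : HasCompactSupport φ)
    (h1 : φ =ᶠ[𝓝 0] 1) :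
    ∃ C > (0 : ℝ), ∃ t₁ > (0 : ℝ), ∀ t ∈ Set.Ioc (0 : ℝ) t₁, ∀ s ∈ Set.Icc (-S) S,
      ∃ Is : ℂ,
        Tendsto (fun R : ℝ => Complex.ofReal (1 / (2 * Real.pi)) * Iint n s R)
          atTop (𝓝 Is) ∧
        ‖Ustar n γ φ α t (γ + s * t ^ ((n : ℝ)⁻¹)) - (1 / 2 - Is)‖ ≤
          C * t ^ (α * n - 1) := by
  obtain ⟨C, hC⟩ := exists_eventually_norm_Ustar_sub_le hne hγ hα hα' S hφ hc h1
  obtain ⟨t₁, ht₁, hsub⟩ := mem_nhdsGT_iff_exists_Ioc_subset.1 hC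
  refine ⟨max C 1, by positivity, t₁, ht₁, fun t ht s hs => ?_⟩
  obtain ⟨Is, hIs, hle⟩ := hsub ht s hs
  have ht0 : 0 ≤ t := ht.1.le
  exact ⟨Is, hIs, hle.trans (by gcongr; exact le_max_left C 1)⟩

end ThetaSum

section GoodPhi

lemma GoodPhi.hasCompactSupport {φ : ℝ → ℝ} (hφ : GoodPhi φ) : HasCompactSupport φ :=
  HasCompactSupport.intro (isCompact_Icc (a := (-2 : ℝ)) (b := 2)) fun _ hx =>
    hφ.2.2.1 _ (not_lt.1 fun h => hx (abs_le.1 h.le))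

lemma GoodPhi.eventuallyEq_one {φ : ℝ → ℝ} (hφ : GoodPhi φ) : φ =ᶠ[nhds 0] 1 := by
  filter_upwards [Metric.closedBall_mem_nhds (0 : ℝ) one_half_pos] with x hx
  exact hφ.2.1 x (by simpa using hx)

end GoodPhi

/-- `n` even: with `I(s) = (1/2π)·lim_{R→∞}∫_{−R}^R e(y^n)sin(2πsy)dy/y`,
there are `C > 0`, `t₁ > 0` such that for `0 < t ≤ t₁` and `s ∈ [−S,S]`, `I(s)` exists and
`|U*(t, γ + s·t^{1/n}) − (1/2 − I(s))| ≤ C·t^{αn−1}`. -/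
theorem stmt19 (n : ℕ) (hn : 2 ≤ n) (hne : Even n) (Δ : ℝ) (hΔ0 : 0 < Δ) (hΔ1 : Δ < 1)
    (hΔ2 : n = 2 → Δ < 1 / 2) (γ : ℝ) (hγ : γ ∈ Set.Ioo (0 : ℝ) (1 / 2))
    (α : ℝ) (hα1 : ((n : ℝ) - Δ)⁻¹ < α) (hα2 : α < ((n : ℝ) - 1)⁻¹)
    (S : ℝ) (hS : 0 < S) (φ : ℝ → ℝ) (hφ : GoodPhi φ) :
    ∃ C > (0 : ℝ), ∃ t₁ > (0 : ℝ), ∀ t ∈ Set.Ioc (0 : ℝ) t₁, ∀ s ∈ Set.Icc (-S) S,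
      ∃ Is : ℂ,
        Tendsto (fun R : ℝ => Complex.ofReal (1 / (2 * Real.pi)) * Iint n s R)
          atTop (nhds Is) ∧
        ‖Ustar n γ φ α t (γ + s * t ^ ((n : ℝ)⁻¹)) - (1 / 2 - Is)‖ ≤
          C * t ^ (α * n - 1) := by
  have hn2 : (2 : ℝ) ≤ n := mod_cast hn
  have hα : (n : ℝ)⁻¹ < α := (inv_strictAnti₀ (by linarith) (by linarith)).trans hα1
  exact stmt19_general hne hγ hα hα2 S hφ.1 hφ.hasCompactSupport hφ.eventuallyEq_one
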